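/- Let N ≥ 1 and let L, T be subsets of {1, …, 2N} with |L| = N and |T| = w. Let π be a uniformly random permutation of {1, …, 2N}, and independently let M be a random subset of L in which each element of L is included independently with probability 1/2. Then the probability that the image π(T) contains no element of M, i.e. Pr[ π(T) ∩ M = ∅ ], is at most (3/4)^w. -/

import Mathlib

/-!
For a nonnegative function `f` on a finite set, the product of the values of `f` at `k` points is on
average no larger when the points are drawn without replacement than when they are drawn with
replacement: for a uniformly random permutation `π`, `𝔼 ∏_{x ∈ T} f (π x) ≤ (𝔼 f) ^ |T|`, which is
Maclaurin's inequality `e_k / C(n, k) ≤ (e_1 / n) ^ k` with `k = |T|`. One point `x ∉ T` is added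
at a time: replacing the factor `f (π x)` by `f (π z)` changes nothing if `z ∉ T`, and can only
increase the expectation if `z ∈ T`, because `2 f (π x) f (π z) ≤ f (π x) ^ 2 + f (π z) ^ 2`.
Averaging over all `z` turns the factor into the mean of `f`.

Given `π`, the set `M` avoids `π(T)` with probability `∏_{x ∈ T} f (π x)`, where `f y` is `1 / 2` or
`1` according to whether `y ∈ L`; the mean of this `f` is `3 / 4` when `L` is half of the positions.
-/

open Finset Equiv
open scoped BigOperators

section Maclaurin

variable {α : Type*} [Fintype α] [DecidableEq α]

lemma expect_perm_apply_mul_prod_eq {R : Type*} [CommSemiring R] [Module ℚ≥0 R] (f g : α → R)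
    {U : Finset α} {x z : α} (hx : x ∉ U) (hz : z ∉ U) :
    𝔼 π : Perm α, g (π x) * ∏ y ∈ U, f (π y) = 𝔼 π : Perm α, g (π z) * ∏ y ∈ U, f (π y) := by
  refine Fintype.expect_equiv (Equiv.mulRight (swap x z)) _ _ fun π ↦ ?_
  have swap_fixes : ∀ y ∈ U, swap x z y = y := fun y hy ↦
    swap_apply_of_ne_of_ne (ne_of_mem_of_not_mem hy hx) (ne_of_mem_of_not_mem hy hz)
  have prod_eq : ∏ y ∈ U, f (π (swap x z y)) = ∏ y ∈ U, f (π y) :=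
    prod_congr rfl fun y hy ↦ by rw [swap_fixes y hy]
  simp only [coe_mulRight, Perm.mul_apply, swap_apply_right, prod_eq]

variable {K : Type*} [Field K] [LinearOrder K] [IsStrictOrderedRing K] {f : α → K}

lemma expect_perm_mul_mul_prod_le (hf : ∀ a, 0 ≤ f a) {U : Finset α} {x z : α}
    (hx : x ∉ U) (hz : z ∉ U) :
    𝔼 π : Perm α, f (π x) * f (π z) * ∏ y ∈ U, f (π y) ≤
      𝔼 π : Perm α, f (π z) ^ 2 * ∏ y ∈ U, f (π y) := by
  have am_gm : ∀ π : Perm α, 2 * (f (π x) * f (π z) * ∏ y ∈ U, f (π y)) ≤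
      f (π x) ^ 2 * ∏ y ∈ U, f (π y) + f (π z) ^ 2 * ∏ y ∈ U, f (π y) := fun π ↦ by
    rw [← add_mul, ← mul_assoc, ← mul_assoc]
    exact mul_le_mul_of_nonneg_right (two_mul_le_add_sq _ _) (prod_nonneg fun y _ ↦ hf (π y))
  have expect_am_gm := expect_le_expect (s := univ) fun π _ ↦ am_gm π
  rw [← mul_expect, expect_add_distrib,
    expect_perm_apply_mul_prod_eq f (fun a ↦ f a ^ 2) hx hz] at expect_am_gm
  linarith

lemma expect_perm_apply_mul_prod_le (hf : ∀ a, 0 ≤ f a) {T : Finset α} {x : α} (hx : x ∉ T)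
    (z : α) :
    𝔼 π : Perm α, f (π x) * ∏ y ∈ T, f (π y) ≤ 𝔼 π : Perm α, f (π z) * ∏ y ∈ T, f (π y) := by
  by_cases hz : z ∈ T
  · have hxU : x ∉ T.erase z := fun h ↦ hx (mem_of_mem_erase h)
    simpa only [← mul_prod_erase T _ hz, ← mul_assoc, ← sq] using
      expect_perm_mul_mul_prod_le hf hxU (notMem_erase z T)
  · exact (expect_perm_apply_mul_prod_eq f f hx hz).le

lemma expect_perm_prod_insert_le (hf : ∀ a, 0 ≤ f a) {T : Finset α} {x : α} (hx : x ∉ T) :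
    𝔼 π : Perm α, ∏ y ∈ insert x T, f (π y) ≤
      (𝔼 a, f a) * 𝔼 π : Perm α, ∏ y ∈ T, f (π y) := by
  have expect_apply : ∀ π : Perm α, 𝔼 z, f (π z) = 𝔼 a, f a := fun π ↦
    Fintype.expect_equiv π _ _ fun _ ↦ rfl
  calc 𝔼 π : Perm α, ∏ y ∈ insert x T, f (π y)
      = 𝔼 π : Perm α, f (π x) * ∏ y ∈ T, f (π y) := by simp only [prod_insert hx]
    _ ≤ 𝔼 z, 𝔼 π : Perm α, f (π z) * ∏ y ∈ T, f (π y) :=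
        le_expect ⟨x, mem_univ x⟩ fun z _ ↦ expect_perm_apply_mul_prod_le hf hx z
    _ = 𝔼 π : Perm α, (𝔼 z, f (π z)) * ∏ y ∈ T, f (π y) := by
        rw [expect_comm]
        simp only [expect_mul]
    _ = (𝔼 a, f a) * 𝔼 π : Perm α, ∏ y ∈ T, f (π y) := by simp only [expect_apply, mul_expect]

theorem expect_perm_prod_le_expect_pow_card (hf : ∀ a, 0 ≤ f a) (T : Finset α) :
    𝔼 π : Perm α, ∏ x ∈ T, f (π x) ≤ (𝔼 a, f a) ^ #T := by
  induction T using Finset.induction_on with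
  | empty => simp
  | insert x T hx ih =>
    rw [card_insert_of_notMem hx, pow_succ']
    exact (expect_perm_prod_insert_le hf hx).trans
      (mul_le_mul_of_nonneg_left ih (expect_nonneg fun a _ ↦ hf a))

end Maclaurin

section Marking

lemma dens_filter_prod_eq_expect {α β K : Type*} [Fintype α] [Fintype β] [Semifield K] [CharZero K]
    (P : α → β → Prop) [∀ a, DecidablePred (P a)] :
    (({p | P p.1 p.2} : Finset (α × β)).dens : K) = 𝔼 a, (({b | P a b} : Finset β).dens : K) := by
  have card_eq_sum : #({p | P p.1 p.2} : Finset (α × β)) = ∑ a, #({b | P a b} : Finset β) := by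
    simp only [card_filter, Fintype.sum_prod_type]
  rw [Fintype.expect_eq_sum_div_card]
  simp only [nnratCast_dens, card_eq_sum, Fintype.card_prod, ← sum_div]
  push_cast
  rw [div_div, mul_comm]

variable {α : Type*} [DecidableEq α]

/-- The probability that the position `y` does not belong to a random subset of `L` which contains
each element of `L` with probability `1 / 2`. This is the factor that `y = π x` contributes to the
probability that the subset avoids `π(T)`. -/
noncomputable def unmarkedProb (L : Finset α) (y : α) : ℝ := if y ∈ L then 1 / 2 else 1

lemma unmarkedProb_nonneg (L : Finset α) (y : α) : 0 ≤ unmarkedProb L y := by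
  unfold unmarkedProb
  positivity

variable [Fintype α]

lemma dens_forall_mem_eq_false (S : Finset α) :
    ({M | ∀ y ∈ S, M y = false} : Finset (α → Bool)).dens = (1 / 2) ^ #S := by
  have eq_piFinset : ({M | ∀ y ∈ S, M y = false} : Finset (α → Bool)) =
      Fintype.piFinset fun y ↦ if y ∈ S then {false} else univ := by
    ext M
    simp only [mem_filter_univ, Fintype.mem_piFinset]
    refine forall_congr' fun y ↦ ?_
    by_cases hy : y ∈ S <;> simp [hy]
  have card_eq : #({M | ∀ y ∈ S, M y = false} : Finset (α → Bool)) = 2 ^ #Sᶜ := by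
    simp [eq_piFinset, apply_ite, prod_ite, ← compl_filter]
  rw [dens, card_eq, Fintype.card_fun, Fintype.card_bool, ← card_compl_add_card S, pow_add]
  push_cast
  rw [div_mul_cancel_left₀ (by positivity), one_div, inv_pow]

lemma expect_unmarkedProb [Nonempty α] (L : Finset α) :
    𝔼 y, unmarkedProb L y = 1 - (#L / (2 * Fintype.card α) : ℝ) := by
  have unmarkedProb_eq : ∀ y, unmarkedProb L y = 1 - if y ∈ L then (1 / 2 : ℝ) else 0 := fun y ↦ by
    unfold unmarkedProb
    split_ifs <;> norm_num
  simp only [unmarkedProb_eq, expect_sub_distrib, Fintype.expect_one]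
  rw [Fintype.expect_eq_sum_div_card, sum_ite_mem, univ_inter, sum_const, nsmul_eq_mul]
  ring

lemma dens_forall_mem_apply_eq_false (L T : Finset α) (π : Perm α) :
    ((({M | ∀ x ∈ T, π x ∈ L → M (π x) = false} : Finset (α → Bool)).dens : ℚ≥0) : ℝ) =
      ∏ x ∈ T, unmarkedProb L (π x) := by
  have dens_eq := dens_forall_mem_eq_false ({x ∈ T | π x ∈ L}.map π.toEmbedding)
  simp only [forall_mem_map, mem_filter, and_imp, coe_toEmbedding, card_map] at dens_eq
  simp [dens_eq, unmarkedProb, prod_ite]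

theorem stmt15_general [Nonempty α] (L T : Finset α) :
    (#{p : Perm α × (α → Bool) | ∀ x ∈ T, p.1 x ∈ L → p.2 (p.1 x) = false} : ℝ) /
        Fintype.card (Perm α × (α → Bool)) ≤
      (1 - #L / (2 * Fintype.card α)) ^ #T := by
  rw [← nnratCast_dens, dens_filter_prod_eq_expect
    fun (π : Perm α) (M : α → Bool) ↦ ∀ x ∈ T, π x ∈ L → M (π x) = false]
  simp only [dens_forall_mem_apply_eq_false, ← expect_unmarkedProb]
  exact expect_perm_prod_le_expect_pow_card (unmarkedProb_nonneg L) T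

end Marking

theorem stmt15 (N : ℕ) (hN : 1 ≤ N) (L T : Finset (Fin (2 * N)))
    (hL : L.card = N) (w : ℕ) (hT : T.card = w) :
    ((Finset.univ.filter (fun p : Equiv.Perm (Fin (2 * N)) × (Fin (2 * N) → Bool) =>
          ∀ x ∈ T, p.1 x ∈ L → p.2 (p.1 x) = false)).card : ℝ)
        / ((Finset.univ : Finset (Equiv.Perm (Fin (2 * N)) × (Fin (2 * N) → Bool))).card : ℝ)
      ≤ (3 / 4 : ℝ) ^ w := by
  have : NeZero (2 * N) := ⟨by lia⟩
  have half : 1 - (#L / (2 * Fintype.card (Fin (2 * N))) : ℝ) = 3 / 4 := by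
    rw [hL, Fintype.card_fin]
    push_cast
    field_simp
    norm_num
  rw [card_univ, ← half, ← hT]
  convert stmt15_general L T
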